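/- arXiv:2509.15438 — 2 statements merged into one kernel-verified Lean document; each statement's English description precedes it below -/
import Mathlib

section
/- Let k be an algebraically closed field and let β be a nontrivial, linear, upper-triangular 𝔾ₐ-coaction on A = k[x₁,…,xₙ]. Let W := {ℓ ∈ span_k(x₁,…,xₙ) : β(ℓ) = ℓ} be the subspace of invariant linear forms. Then the large pedestal ideal of A is zero if and only if: k has characteristic p > 0, W has dimension n − 1, and for every linear form x ∉ W there exist no polynomial c(t) ∈ k[t] and linear form w ∈ W with β(x) − x = c(t)·w (equivalently, the variance of any non-invariant element of the second socle is greater than two). In particular, if the large pedestal ideal of A is zero and β is nontrivial, then the characteristic of k is positive. -/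
open Polynomial

/-- Substitute `t ↦ t₁ + t₂` into a polynomial, landing in `R[t₁][t₂]`
(inner variable `t₁`, outer variable `t₂`). -/
noncomputable def coaddSubst {R : Type*} [CommSemiring R] (p : Polynomial R) :
    Polynomial (Polynomial R) :=
  p.eval₂ ((Polynomial.C : Polynomial R →+* Polynomial (Polynomial R)).comp
      (Polynomial.C : R →+* Polynomial R))
    (Polynomial.C Polynomial.X + Polynomial.X)

/-- A 𝔾ₐ-coaction on a commutative `k`-algebra `A`: a `k`-algebra homomorphism
`β : A → A[t]` satisfying the counit and coassociativity axioms. -/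
def IsGaCoaction {k A : Type*} [CommSemiring k] [CommSemiring A] [Algebra k A]
    (β : A →ₐ[k] Polynomial A) : Prop :=
  (∀ a : A, (β a).eval 0 = a) ∧
  (∀ a : A, coaddSubst (β a) = (β a).map β.toRingHom)

/-- `c(t) ∈ k[t]` is additive: `c(t₁+t₂) = c(t₁) + c(t₂)` in `k[t₁][t₂]`. -/
def IsAdditivePoly {k : Type*} [CommSemiring k] (c : Polynomial k) : Prop :=
  coaddSubst c = Polynomial.C c + c.map (Polynomial.C : k →+* Polynomial k)

/-!
Write `δ(a) = β(a) − a`. On the second socle `δ` takes values in the additive polynomials over the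
ring of invariants, and the large pedestal ideal vanishes iff no such nonzero `δ(g)` is a pure
tensor `c(t) · w`. In characteristic zero additive polynomials are linear, so `δ(g)` is always pure.

In characteristic `p` suppose no `δ(g)` is pure. The degrees of additive polynomials are powers of
`p` and `δ(g ^ p ^ d) = δ(g) ^ p ^ d`, so right division is possible among displacements after
scaling by invariants: there is a `δ(g)` dividing every other one up to such a scaling. Now let
`x`, `z` be linear forms in the second socle. By Gauss's lemma the primitive part `P` of `δ(g)`
divides `δ(x)` and `δ(z)`. As `P` is not in `k[t]` whereas `δ(x)` and `δ(z)` have degree one in the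
variables, both are `k[t]`-multiples of `P`; being additive and proportional over `k(t)`, and not
pure, they are proportional over `k`. So `x` spans the linear forms of the second socle modulo the
invariant ones. A further linear form `z` would have `δ(z)` with coefficients in the span of `x` and
the invariants; coassociativity makes `δ` of the `i`-th coefficient symmetric in `i` and its own
coefficient index, which again forces `δ(x)` to be pure unless `z` is in the second socle already.

Conversely, if `x` and the invariant linear forms span all linear forms then `δ(x)` divides every
`δ(a)`. Every divisor of a nonzero pure tensor is pure, so if `δ(x)` is not pure, no nonzero `δ(a)`
is.
-/

section CoaddSubst

variable {R : Type*} [CommRing R]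

lemma coeff_coaddSubst (p : R[X]) (i : ℕ) : (coaddSubst p).coeff i = hasseDeriv i p := by
  have coaddSubst_eq_taylor : coaddSubst p = taylor X (p.map C) := by
    rw [taylor_apply, comp, eval₂_map, coaddSubst, add_comm]
  have hasseDeriv_map : hasseDeriv i (p.map C) = (hasseDeriv i p).map C := by
    ext j : 1
    simp [hasseDeriv_coeff]
  rw [coaddSubst_eq_taylor, taylor_coeff, hasseDeriv_map, eval_map, eval₂_C_X]

lemma coeff_coeff_coaddSubst (p : R[X]) (i j : ℕ) :
    ((coaddSubst p).coeff i).coeff j = ((i + j).choose i : R) * p.coeff (i + j) := by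
  rw [coeff_coaddSubst, hasseDeriv_coeff, add_comm j i]

lemma coaddSubst_mul (p q : R[X]) : coaddSubst (p * q) = coaddSubst p * coaddSubst q :=
  eval₂_mul _ _

lemma coaddSubst_ne_zero {p : R[X]} (hp : p ≠ 0) : coaddSubst p ≠ 0 := by
  intro h
  apply hp
  rw [← hasseDeriv_zero' p, ← coeff_coaddSubst, h, coeff_zero]

end CoaddSubst

section AdditivePoly

variable {R : Type*} [CommRing R]

lemma isAdditivePoly_iff {f : R[X]} :
    IsAdditivePoly f ↔ f.coeff 0 = 0 ∧
      ∀ i j, 0 < i → 0 < j → ((i + j).choose i : R) * f.coeff (i + j) = 0 := by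
  simp only [IsAdditivePoly, Polynomial.ext_iff, coeff_add, coeff_map, coeff_C,
    coeff_coeff_coaddSubst]
  refine ⟨fun h => ⟨by simpa using h 0 0, fun i j hi hj => ?_⟩, fun ⟨h₀, h⟩ i j => ?_⟩
  · simpa [hi.ne', hj.ne'] using h i j
  · rcases i.eq_zero_or_pos with rfl | hi <;> rcases j.eq_zero_or_pos with rfl | hj
    · simp [h₀]
    · simp [hj.ne']
    · simp [hi.ne']
    · simpa [hi.ne', hj.ne'] using h i j hi hj

lemma IsAdditivePoly.eq_C_mul_X [NoZeroDivisors R] [CharZero R] {f : R[X]}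
    (hf : IsAdditivePoly f) : f = C (f.coeff 1) * X := by
  obtain ⟨h₀, h⟩ := isAdditivePoly_iff.1 hf
  ext (_ | _ | j)
  · simp [h₀]
  · simp
  · have hj := h 1 (j + 1) one_pos j.succ_pos
    rw [Nat.choose_one_right, add_comm 1] at hj
    simpa [coeff_X] using (mul_eq_zero.1 hj).resolve_left (Nat.cast_ne_zero.2 (by omega))

lemma IsAdditivePoly.exists_natDegree_eq_pow [NoZeroDivisors R] (p : ℕ) [Fact p.Prime] [CharP R p]
    {f : R[X]} (hf : IsAdditivePoly f) (hf₀ : f ≠ 0) : ∃ e, f.natDegree = p ^ e := by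
  obtain ⟨h₀, h⟩ := isAdditivePoly_iff.1 hf
  have hlead : f.coeff f.natDegree ≠ 0 := leadingCoeff_ne_zero.2 hf₀
  have hpos : 0 < f.natDegree := Nat.pos_of_ne_zero fun hdeg => hlead (by rw [hdeg, h₀])
  refine ⟨_, Choose.eq_pow_multiplicity_of_choose_modEq_zero_nat hpos fun i hi => ?_⟩
  obtain ⟨hi₁, hi₂⟩ := Finset.mem_Icc.1 hi
  have hi := h i (f.natDegree - i) hi₁ (by omega)
  rw [Nat.add_sub_cancel' (by omega)] at hi
  exact Nat.modEq_zero_iff_dvd.2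
    ((CharP.cast_eq_zero_iff R p _).1 ((mul_eq_zero.1 hi).resolve_right hlead))

/- In `R[s][t]`, `C f` is `f(s)` and `f.map C` is `f(t)`. Expanding `b(s+t) fᵢ(s+t) =
a(s+t) gᵢ(s+t)` gives a linear relation between `fᵢ(s)` and `fᵢ(t)` whose coefficients do not depend
on `i`; unless these coefficients vanish, `f₁` and `f₂` are proportional. -/
lemma IsAdditivePoly.cross_mul_eq_or_cross_mul_eq [IsDomain R] {a b f₁ f₂ g₁ g₂ : R[X]}
    (hf₁ : IsAdditivePoly f₁) (hf₂ : IsAdditivePoly f₂) (hg₁ : IsAdditivePoly g₁)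
    (hg₂ : IsAdditivePoly g₂) (ha : a ≠ 0) (h₁ : b * f₁ = a * g₁) (h₂ : b * f₂ = a * g₂) :
    C b * a.map C = C a * b.map C ∨ C f₁ * f₂.map C = C f₂ * f₁.map C := by
  have relation {f g : R[X]} (hf : IsAdditivePoly f) (hg : IsAdditivePoly g)
      (h : b * f = a * g) :
      C a * (coaddSubst b * a.map C - coaddSubst a * b.map C) * f.map C =
        a.map C * (coaddSubst a * C b - coaddSubst b * C a) * C f := by
    have h_sum := congrArg coaddSubst h
    have h_s := congrArg C h
    have h_t := congrArg (Polynomial.map C) h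
    rw [coaddSubst_mul, coaddSubst_mul, hf, hg] at h_sum
    rw [C_mul, C_mul] at h_s
    rw [Polynomial.map_mul, Polynomial.map_mul] at h_t
    linear_combination C a * a.map C * h_sum - coaddSubst a * a.map C * h_s -
      coaddSubst a * C a * h_t
  have r₁ := relation hf₁ hg₁ h₁
  have r₂ := relation hf₂ hg₂ h₂
  have coeff_s : C a * (coaddSubst b * a.map C - coaddSubst a * b.map C) *
      (C f₁ * f₂.map C - C f₂ * f₁.map C) = 0 := by
    linear_combination C f₁ * r₂ - C f₂ * r₁
  have coeff_t : a.map C * (coaddSubst a * C b - coaddSubst b * C a) *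
      (C f₁ * f₂.map C - C f₂ * f₁.map C) = 0 := by
    linear_combination f₁.map C * r₂ - f₂.map C * r₁
  have key : coaddSubst a * ((C b * a.map C - C a * b.map C) *
      (C f₁ * f₂.map C - C f₂ * f₁.map C)) = 0 := by
    linear_combination coeff_s + coeff_t
  rcases mul_eq_zero.1 ((mul_eq_zero.1 key).resolve_left (coaddSubst_ne_zero ha)) with h | h
  · exact .inl (sub_eq_zero.1 h)
  · exact .inr (sub_eq_zero.1 h)

variable {k : Type*} [Field k]

lemma exists_eq_C_mul_of_cross_mul_eq {f g : k[X]} (hf : f ≠ 0)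
    (h : C g * f.map C = C f * g.map C) : ∃ r : k, g = C r * f := by
  have hlead : f.leadingCoeff ≠ 0 := leadingCoeff_ne_zero.2 hf
  have h_coeff := congrArg (fun P : k[X][X] => P.coeff f.natDegree) h
  simp only [coeff_C_mul, coeff_map, coeff_natDegree] at h_coeff
  refine ⟨f.leadingCoeff⁻¹ * g.coeff f.natDegree, ?_⟩
  rw [C_mul, mul_assoc, mul_comm _ f, ← h_coeff, mul_left_comm, ← C_mul, inv_mul_cancel₀ hlead,
    C_1, mul_one]

lemma IsAdditivePoly.rank_le_one_or_proportional {ι : Type*} {f g : ι → k[X]}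
    (hf : ∀ i, IsAdditivePoly (f i)) (hg : ∀ i, IsAdditivePoly (g i)) {a b : k[X]} (ha : a ≠ 0)
    (h : ∀ i, b * f i = a * g i) :
    (∃ (c : k[X]) (w : ι → k), ∀ i, f i = C (w i) * c) ∨ ∃ r : k, ∀ i, g i = C r * f i := by
  by_cases hcross : ∀ i j, C (f i) * (f j).map C = C (f j) * (f i).map C
  · left
    by_cases hzero : ∀ i, f i = 0
    · exact ⟨0, 0, by simpa using hzero⟩
    · obtain ⟨j, hj⟩ := not_forall.1 hzero
      choose w hw using fun i => exists_eq_C_mul_of_cross_mul_eq hj (hcross i j)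
      exact ⟨f j, w, hw⟩
  · right
    push Not at hcross
    obtain ⟨i, j, hij⟩ := hcross
    obtain ⟨r, rfl⟩ := exists_eq_C_mul_of_cross_mul_eq ha
      (((hf i).cross_mul_eq_or_cross_mul_eq (hf j) (hg i) (hg j) ha (h i) (h j)).resolve_right hij)
    exact ⟨r, fun l => mul_left_cancel₀ ha (by rw [← h l]; ring)⟩

end AdditivePoly

section PureTensor

variable (k : Type*) {A : Type*} [Field k] [CommRing A] [Algebra k A]

/-- `D ∈ A[t] = k[t] ⊗ A` is a pure tensor `c(t) · w`, with `c ∈ k[t]` and `w ∈ A`: the form of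
`β(g) − g` in the definition of the large pedestal ideal. -/
def IsPureTensor (D : A[X]) : Prop :=
  ∃ (c : k[X]) (w : A), D = c.map (algebraMap k A) * C w

variable {k}

lemma coeff_map_mul_C (c : k[X]) (w : A) (j : ℕ) :
    (c.map (algebraMap k A) * C w).coeff j = c.coeff j • w := by
  rw [coeff_mul_C, coeff_map, Algebra.smul_def]

lemma isPureTensor_of_coeff_eq_smul {D : A[X]} {w : A} (h : ∀ j, ∃ r : k, D.coeff j = r • w) :
    IsPureTensor k D := by
  choose r hr using h
  refine ⟨∑ j ∈ D.support, monomial j (r j), w, ?_⟩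
  ext j
  rw [coeff_map_mul_C, finsetSum_coeff]
  by_cases hj : j ∈ D.support
  · simp [coeff_monomial, hj, hr]
  · simp [coeff_monomial, hj, notMem_support_iff.1 hj]

lemma mem_of_coeff_map_mul_C_mem {U : Submodule k A} {c : k[X]} (hc : c ≠ 0) {w : A}
    (h : ∀ j, (c.map (algebraMap k A) * C w).coeff j ∈ U) : w ∈ U := by
  have hlead := h c.natDegree
  rw [coeff_map_mul_C] at hlead
  exact (U.smul_mem_iff (leadingCoeff_ne_zero.2 hc)).1 hlead

lemma IsAdditivePoly.of_map_mul_C {c : k[X]} {w : A} (hw : w ≠ 0)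
    (h : IsAdditivePoly (c.map (algebraMap k A) * C w)) : IsAdditivePoly c := by
  simp only [isAdditivePoly_iff, coeff_map_mul_C] at h ⊢
  refine ⟨(smul_eq_zero.1 h.1).resolve_right hw, fun i j hi hj => ?_⟩
  have hij := h.2 i j hi hj
  rw [← nsmul_eq_mul, ← Nat.cast_smul_eq_nsmul k, smul_smul] at hij
  exact (smul_eq_zero.1 hij).resolve_right hw

end PureTensor

section Primitive

variable {R : Type*} [CommRing R] [UniqueFactorizationMonoid R]

lemma exists_isPrimitive_eq_C_mul (G : R[X]) : ∃ r P, P.IsPrimitive ∧ G = C r * P := by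
  let _ : NormalizedGCDMonoid R := Classical.choice inferInstance
  exact ⟨G.content, G.primPart, G.isPrimitive_primPart, G.eq_C_content_mul_primPart⟩

lemma dvd_of_isPrimitive_of_dvd_C_mul [IsDomain R] {P Q : R[X]} (hP : P.IsPrimitive) {r : R}
    (hr : r ≠ 0) (h : P ∣ C r * Q) : P ∣ Q := by
  let _ : NormalizedGCDMonoid R := Classical.choice inferInstance
  obtain ⟨H, hH⟩ := h
  have hrH : r ∣ (P * H).content := dvd_content_iff_C_dvd.2 ⟨Q, hH.symm⟩
  rw [(associated_content_mul ..).dvd_iff_dvd_right, hP.content_eq_one, one_mul,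
    dvd_content_iff_C_dvd] at hrH
  obtain ⟨K, rfl⟩ := hrH
  refine ⟨K, mul_left_cancel₀ (C_ne_zero.2 hr) ?_⟩
  rw [hH, mul_left_comm]

end Primitive

section SwapVars

variable {σ k : Type*} [Field k]

variable (σ k) in
/-- The identification `k[x][t] ≃ k[t][x]`, which gives a polynomial in `t` with coefficients in
`k[x]` a total degree in `x`. -/
noncomputable def swapVars : (MvPolynomial σ k)[X] ≃ₐ[k] MvPolynomial σ k[X] :=
  (MvPolynomial.optionEquivLeft k σ).symm.trans (MvPolynomial.optionEquivRight k σ)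

lemma swapVars_X : swapVars σ k X = MvPolynomial.C X := by
  simp [swapVars]

lemma swapVars_C (p : MvPolynomial σ k) : swapVars σ k (C p) = p.map C := by
  induction p using MvPolynomial.induction_on with
  | C a =>
    rw [MvPolynomial.map_C]
    exact (swapVars σ k).commutes a
  | add p q hp hq => simp only [map_add, hp, hq]
  | mul_X p i hp =>
    have h_X : swapVars σ k (C (MvPolynomial.X i)) = MvPolynomial.X i := by simp [swapVars]
    simp only [map_mul, hp, h_X, MvPolynomial.map_X]

lemma coeff_coeff_swapVars (D : (MvPolynomial σ k)[X]) (m : σ →₀ ℕ) (j : ℕ) :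
    ((swapVars σ k D).coeff m).coeff j = (D.coeff j).coeff m := by
  induction D using Polynomial.induction_on' with
  | add D E hD hE => simp only [map_add, MvPolynomial.coeff_add, coeff_add, hD, hE]
  | monomial n p =>
    rw [← C_mul_X_pow_eq_monomial, map_mul, map_pow, swapVars_X, swapVars_C, ← map_pow,
      mul_comm, MvPolynomial.coeff_C_mul, MvPolynomial.coeff_map, coeff_X_pow_mul',
      coeff_C_mul_X_pow, coeff_C]
    rcases lt_trichotomy j n with h | rfl | h
    · simp [h.ne, h.not_ge]
    · simp
    · simp [h.ne', h.le, Nat.sub_ne_zero_of_lt h]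

lemma swapVars_map (c : k[X]) :
    swapVars σ k (c.map (algebraMap k (MvPolynomial σ k))) = MvPolynomial.C c := by
  classical
  ext m j
  rw [coeff_coeff_swapVars, coeff_map, MvPolynomial.algebraMap_eq, MvPolynomial.coeff_C,
    MvPolynomial.coeff_C]
  split_ifs <;> simp

lemma totalDegree_swapVars_le {D : (MvPolynomial σ k)[X]} {N : ℕ}
    (h : ∀ j, (D.coeff j).totalDegree ≤ N) : (swapVars σ k D).totalDegree ≤ N := by
  refine Finset.sup_le fun m hm => ?_
  obtain ⟨j, hj⟩ : ∃ j, ((swapVars σ k D).coeff m).coeff j ≠ 0 := by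
    by_contra! hzero
    exact MvPolynomial.mem_support_iff.1 hm (Polynomial.ext hzero)
  rw [coeff_coeff_swapVars] at hj
  exact (MvPolynomial.le_totalDegree (MvPolynomial.mem_support_iff.2 hj)).trans (h j)

lemma exists_eq_map_of_totalDegree_swapVars_eq_zero {D : (MvPolynomial σ k)[X]}
    (h : (swapVars σ k D).totalDegree = 0) :
    ∃ c : k[X], D = c.map (algebraMap k (MvPolynomial σ k)) :=
  ⟨_, (swapVars σ k).injective
    ((MvPolynomial.totalDegree_eq_zero_iff_eq_C.1 h).trans (swapVars_map _).symm)⟩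

lemma totalDegree_swapVars_mul {D E : (MvPolynomial σ k)[X]} (h : D * E ≠ 0) :
    (swapVars σ k (D * E)).totalDegree =
      (swapVars σ k D).totalDegree + (swapVars σ k E).totalDegree := by
  rw [map_mul]
  exact MvPolynomial.totalDegree_mul_of_isDomain
    ((swapVars σ k).map_ne_zero_iff.2 (left_ne_zero_of_mul h))
    ((swapVars σ k).map_ne_zero_iff.2 (right_ne_zero_of_mul h))

lemma IsPureTensor.of_dvd {D P : (MvPolynomial σ k)[X]} (hP : IsPureTensor k P) (hP₀ : P ≠ 0)
    (h : D ∣ P) : IsPureTensor k D := by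
  obtain ⟨c, w, rfl⟩ := hP
  obtain ⟨r, D', hD', rfl⟩ := exists_isPrimitive_eq_C_mul D
  rw [mul_comm _ (C w)] at h hP₀
  obtain ⟨H, hH⟩ := dvd_of_isPrimitive_of_dvd_C_mul hD' (C_ne_zero.1 (left_ne_zero_of_mul hP₀))
    (dvd_of_mul_left_dvd h)
  have hc := right_ne_zero_of_mul hP₀
  have hdeg := congrArg (fun Q => (swapVars σ k Q).totalDegree) hH
  rw [hH] at hc
  simp only [swapVars_map, MvPolynomial.totalDegree_C, totalDegree_swapVars_mul hc] at hdeg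
  obtain ⟨m, rfl⟩ := exists_eq_map_of_totalDegree_swapVars_eq_zero (D := D') (by omega)
  exact ⟨m, r, mul_comm _ _⟩

lemma exists_eq_map_mul_of_dvd {G D : (MvPolynomial σ k)[X]}
    (hG : ∀ c : k[X], G ≠ c.map (algebraMap k (MvPolynomial σ k)))
    (hD : ∀ j, (D.coeff j).totalDegree ≤ 1) (h : G ∣ D) :
    ∃ a : k[X], D = a.map (algebraMap k (MvPolynomial σ k)) * G := by
  obtain ⟨H, rfl⟩ := h
  by_cases hGH : G * H = 0
  · exact ⟨0, by simp [hGH]⟩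
  have hdeg := totalDegree_swapVars_mul hGH
  have hdeg_le := totalDegree_swapVars_le hD
  have hdeg_G : (swapVars σ k G).totalDegree ≠ 0 := fun hzero =>
    (exists_eq_map_of_totalDegree_swapVars_eq_zero hzero).elim hG
  obtain ⟨a, rfl⟩ := exists_eq_map_of_totalDegree_swapVars_eq_zero (D := H) (by omega)
  exact ⟨a, mul_comm _ _⟩

lemma IsAdditivePoly.coeff_swapVars {D : (MvPolynomial σ k)[X]} (hD : IsAdditivePoly D)
    (m : σ →₀ ℕ) : IsAdditivePoly ((swapVars σ k D).coeff m) := by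
  obtain ⟨h₀, h⟩ := isAdditivePoly_iff.1 hD
  refine isAdditivePoly_iff.2 ⟨by simp [coeff_coeff_swapVars, h₀], fun i j hi hj => ?_⟩
  rw [coeff_coeff_swapVars, ← nsmul_eq_mul, ← MvPolynomial.coeff_smul, nsmul_eq_mul, h i j hi hj,
    MvPolynomial.coeff_zero]

lemma IsAdditivePoly.isPureTensor_or_eq_smul {D E : (MvPolynomial σ k)[X]}
    (hD : IsAdditivePoly D) (hE : IsAdditivePoly E) {a b : k[X]} (ha : a ≠ 0)
    (h : b.map (algebraMap k (MvPolynomial σ k)) * D = a.map (algebraMap k _) * E) :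
    IsPureTensor k D ∨ ∃ r : k, E = r • D := by
  have h_coeff (m : σ →₀ ℕ) :
      b * (swapVars σ k D).coeff m = a * (swapVars σ k E).coeff m := by
    rw [← MvPolynomial.coeff_C_mul, ← MvPolynomial.coeff_C_mul, ← swapVars_map, ← map_mul, h,
      map_mul, swapVars_map]
  rcases rank_le_one_or_proportional hD.coeff_swapVars hE.coeff_swapVars ha h_coeff with
    ⟨c, w, hw⟩ | ⟨r, hr⟩
  · left
    have hDw (j : ℕ) (m : σ →₀ ℕ) : (D.coeff j).coeff m = w m * c.coeff j := by
      rw [← coeff_coeff_swapVars, hw, coeff_C_mul]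
    refine isPureTensor_of_coeff_eq_smul (w := D.coeff c.natDegree)
      fun j => ⟨c.coeff j / c.leadingCoeff, ?_⟩
    ext m
    rw [MvPolynomial.coeff_smul, hDw, hDw, coeff_natDegree, smul_eq_mul]
    by_cases hc : c = 0
    · simp [hc]
    · field [leadingCoeff_ne_zero.2 hc]
  · right
    refine ⟨r, Polynomial.ext fun j => MvPolynomial.ext _ _ fun m => ?_⟩
    rw [coeff_smul, MvPolynomial.coeff_smul, ← coeff_coeff_swapVars, ← coeff_coeff_swapVars, hr,
      coeff_C_mul, smul_eq_mul]

lemma IsAdditivePoly.eq_smul_of_dvd_C_mul {G D E : (MvPolynomial σ k)[X]}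
    (hD : IsAdditivePoly D) (hE : IsAdditivePoly E)
    (hD_deg : ∀ j, (D.coeff j).totalDegree ≤ 1) (hE_deg : ∀ j, (E.coeff j).totalDegree ≤ 1)
    (hG : ¬ IsPureTensor k G) (hD_pure : ¬ IsPureTensor k D) {b₁ b₂ : MvPolynomial σ k}
    (hb₁ : b₁ ≠ 0) (hb₂ : b₂ ≠ 0) (h₁ : G ∣ C b₁ * D) (h₂ : G ∣ C b₂ * E) :
    ∃ r : k, E = r • D := by
  obtain ⟨r, P, hP, rfl⟩ := exists_isPrimitive_eq_C_mul G
  have hP_map (c : k[X]) : P ≠ c.map (algebraMap k (MvPolynomial σ k)) := fun hc =>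
    hG ⟨c, r, by rw [hc, mul_comm]⟩
  have hP_dvd {b : MvPolynomial σ k} (hb : b ≠ 0) {F : (MvPolynomial σ k)[X]}
      (h : C r * P ∣ C b * F) : P ∣ F :=
    dvd_of_isPrimitive_of_dvd_C_mul hP hb (dvd_of_mul_left_dvd h)
  obtain ⟨a₁, ha₁⟩ := exists_eq_map_mul_of_dvd hP_map hD_deg (hP_dvd hb₁ h₁)
  obtain ⟨a₂, ha₂⟩ := exists_eq_map_mul_of_dvd hP_map hE_deg (hP_dvd hb₂ h₂)
  have ha₁₀ : a₁ ≠ 0 := by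
    rintro rfl
    exact hD_pure ⟨0, 0, by simp [ha₁]⟩
  exact (hD.isPureTensor_or_eq_smul hE ha₁₀ (b := a₂) (by rw [ha₁, ha₂]; ring)).resolve_left hD_pure

end SwapVars

section Coaction

variable {k A : Type*} [CommRing k] [CommRing A] [Algebra k A]

/-- The displacement `δ(a) = β(a) − a ∈ A[t]` of `a`, which vanishes exactly on invariants. -/
noncomputable def displacement (β : A →ₐ[k] A[X]) : A →ₗ[k] A[X] :=
  β.toLinearMap - CAlgHom.toLinearMap

/-- The invariants of `β`, as a `k`-subspace of `A` so that they can be intersected with the space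
of linear forms. -/
noncomputable def invariants (β : A →ₐ[k] A[X]) : Submodule k A :=
  LinearMap.eqLocus β.toLinearMap (CAlgHom (R := k) (A := A)).toLinearMap

/-- The second socle of `A`: the elements whose displacement has invariant coefficients. -/
def secondSocle (β : A →ₐ[k] A[X]) : Set A :=
  {g | ∀ i, (displacement β g).coeff i ∈ invariants β}

/-- The large pedestal ideal of `A`, generated by the invariants `h` that occur in an equation
`β(g) = g + c(t) · h` with `c ≠ 0` additive. -/
def largePedestal (β : A →ₐ[k] A[X]) : Ideal A :=
  Ideal.span {h | β h = C h ∧ ∃ (g : A) (c : k[X]), IsAdditivePoly c ∧ c ≠ 0 ∧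
    β g = C g + c.map (algebraMap k A) * C h}

variable {β : A →ₐ[k] A[X]}

lemma displacement_apply (a : A) : displacement β a = β a - C a := rfl

lemma mem_invariants {a : A} : a ∈ invariants β ↔ β a = C a := Iff.rfl

lemma displacement_eq_zero_iff {a : A} : displacement β a = 0 ↔ a ∈ invariants β :=
  sub_eq_zero

lemma largePedestal_eq_bot_iff : largePedestal β = ⊥ ↔
    ∀ (g h : A) (c : k[X]), IsAdditivePoly c → c ≠ 0 → β h = C h →
      β g = C g + c.map (algebraMap k A) * C h → h = 0 := by
  rw [largePedestal, Ideal.span_eq_bot]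
  exact ⟨fun H g h c hc hc₀ hh hg => H h ⟨hh, g, c, hc, hc₀, hg⟩,
    fun H h ⟨hh, g, c, hc, hc₀, hg⟩ => H g h c hc hc₀ hh hg⟩

lemma displacement_mul (a b : A) :
    displacement β (a * b) = displacement β a * β b + C a * displacement β b := by
  simp only [displacement_apply, map_mul]
  ring

lemma displacement_mul_of_mem_invariants {a : A} (ha : a ∈ invariants β) (b : A) :
    displacement β (a * b) = C a * displacement β b := by
  rw [displacement_mul, displacement_eq_zero_iff.2 ha, zero_mul, zero_add]

lemma displacement_pow_char_pow (p : ℕ) [Fact p.Prime] [CharP A p] (a : A) (d : ℕ) :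
    displacement β (a ^ p ^ d) = displacement β a ^ p ^ d := by
  rw [displacement_apply, displacement_apply, sub_pow_char_pow, map_pow, C_pow]

lemma mem_secondSocle_iff_map {g : A} :
    g ∈ secondSocle β ↔ (displacement β g).map β.toRingHom = (displacement β g).map C := by
  simp only [Polynomial.ext_iff (p := map _ _), coeff_map]
  rfl

lemma coeff_displacement_of_ne_zero (a : A) {i : ℕ} (hi : i ≠ 0) :
    (displacement β a).coeff i = (β a).coeff i := by
  rw [displacement_apply, coeff_sub, coeff_C_of_ne_zero hi, sub_zero]

lemma IsGaCoaction.coeff_coeff (hβ : IsGaCoaction β) (a : A) (i j : ℕ) :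
    (β ((β a).coeff i)).coeff j = ((i + j).choose i : A) * (β a).coeff (i + j) := by
  rw [← coeff_coeff_coaddSubst, hβ.2, coeff_map]
  rfl

lemma IsGaCoaction.coeff_zero (hβ : IsGaCoaction β) (a : A) : (β a).coeff 0 = a := by
  rw [coeff_zero_eq_eval_zero, hβ.1]

lemma IsGaCoaction.coeff_zero_displacement (hβ : IsGaCoaction β) (a : A) :
    (displacement β a).coeff 0 = 0 := by
  rw [displacement_apply, coeff_sub, hβ.coeff_zero, coeff_C_zero, sub_self]

lemma IsGaCoaction.coeff_displacement_coeff (hβ : IsGaCoaction β) (a : A) {i j : ℕ} (hi : i ≠ 0)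
    (hj : j ≠ 0) : (displacement β ((displacement β a).coeff i)).coeff j =
      ((i + j).choose i : A) * (displacement β a).coeff (i + j) := by
  rw [coeff_displacement_of_ne_zero _ hi, coeff_displacement_of_ne_zero _ hj, hβ.coeff_coeff,
    coeff_displacement_of_ne_zero _ (by omega)]

lemma IsGaCoaction.coeff_displacement_coeff_comm (hβ : IsGaCoaction β) (a : A) (i j : ℕ) :
    (displacement β ((displacement β a).coeff i)).coeff j =
      (displacement β ((displacement β a).coeff j)).coeff i := by
  rcases eq_or_ne i 0 with rfl | hi
  · simp [hβ.coeff_zero_displacement]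
  rcases eq_or_ne j 0 with rfl | hj
  · simp [hβ.coeff_zero_displacement]
  rw [hβ.coeff_displacement_coeff a hi hj, hβ.coeff_displacement_coeff a hj hi, add_comm j i,
    Nat.choose_symm_add]

lemma IsGaCoaction.isAdditivePoly_displacement (hβ : IsGaCoaction β) {g : A}
    (hg : g ∈ secondSocle β) : IsAdditivePoly (displacement β g) := by
  refine isAdditivePoly_iff.2 ⟨hβ.coeff_zero_displacement g, fun i j hi hj => ?_⟩
  rw [← hβ.coeff_displacement_coeff g hi.ne' hj.ne', displacement_eq_zero_iff.2 (hg i),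
    Polynomial.coeff_zero]

lemma IsGaCoaction.exists_notMem_coeff_displacement_mem (hβ : IsGaCoaction β)
    {U V : Submodule k A} (hV : ∀ v ∈ V, ∀ i, (β v).coeff i ∈ V) (hVU : ¬ V ≤ U) :
    ∃ x ∈ V, x ∉ U ∧ ∀ i, (displacement β x).coeff i ∈ U := by
  obtain ⟨v, hvV, hvU⟩ := SetLike.not_le_iff_exists.1 hVU
  have hfin : {i | (β v).coeff i ∉ U}.Finite :=
    (β v).support.finite_toSet.subset fun i hi =>
      mem_support_iff.2 fun hzero => hi (hzero ▸ U.zero_mem)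
  obtain ⟨N, hN⟩ := hfin.exists_maximal ⟨0, by rwa [Set.mem_ofPred_eq, hβ.coeff_zero]⟩
  refine ⟨_, hV v hvV N, hN.prop, fun j => ?_⟩
  rcases eq_or_ne j 0 with rfl | hj
  · exact hβ.coeff_zero_displacement _ ▸ U.zero_mem
  · rw [coeff_displacement_of_ne_zero _ hj, hβ.coeff_coeff, ← nsmul_eq_mul]
    exact U.nsmul_mem (not_not.1 (hN.not_prop_of_gt (by simpa using Nat.pos_of_ne_zero hj))) _

end Coaction

section RightDivision

lemma degree_C_mul_sub_C_mul_pow_lt {R : Type*} [CommRing R] [IsDomain R] {F G : R[X]}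
    (hF : F ≠ 0) (hG : G ≠ 0) {n : ℕ} (hn : F.natDegree = n * G.natDegree) :
    (C (G.leadingCoeff ^ n) * F - C F.leadingCoeff * G ^ n).degree < F.degree := by
  have hG_lead : G.leadingCoeff ^ n ≠ 0 := pow_ne_zero n (leadingCoeff_ne_zero.2 hG)
  have hF_lead : F.leadingCoeff ≠ 0 := leadingCoeff_ne_zero.2 hF
  have hdeg : (C (G.leadingCoeff ^ n) * F).degree = (C F.leadingCoeff * G ^ n).degree := by
    rw [degree_C_mul hG_lead, degree_C_mul hF_lead, degree_pow, degree_eq_natDegree hF,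
      degree_eq_natDegree hG, hn, nsmul_eq_mul, Nat.cast_mul]
  rw [← degree_C_mul (p := F) hG_lead]
  refine degree_sub_lt_left hdeg (mul_ne_zero (C_ne_zero.2 hG_lead) hF) ?_
  simp only [leadingCoeff_mul, leadingCoeff_C, leadingCoeff_pow]
  exact mul_comm _ _

variable {k A : Type*} [CommRing k] [CommRing A] [Algebra k A] {β : A →ₐ[k] A[X]}

lemma displacement_mul_sub_mul_pow (p : ℕ) [Fact p.Prime] [CharP A p] {a b : A}
    (ha : a ∈ invariants β) (hb : b ∈ invariants β) (g g' : A) (d : ℕ) :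
    displacement β (a * g' - b * g ^ p ^ d) =
      C a * displacement β g' - C b * displacement β g ^ p ^ d := by
  rw [map_sub, displacement_mul_of_mem_invariants ha, displacement_mul_of_mem_invariants hb,
    displacement_pow_char_pow]

lemma mul_sub_mul_pow_mem_secondSocle (p : ℕ) [Fact p.Prime] [CharP A p] {a b g g' : A}
    (ha : a ∈ invariants β) (hb : b ∈ invariants β) (hg : g ∈ secondSocle β)
    (hg' : g' ∈ secondSocle β) (d : ℕ) : a * g' - b * g ^ p ^ d ∈ secondSocle β := by
  rw [mem_secondSocle_iff_map] at hg hg' ⊢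
  have ha_map : β.toRingHom a = C a := ha
  have hb_map : β.toRingHom b = C b := hb
  simp only [displacement_mul_sub_mul_pow p ha hb, Polynomial.map_sub, Polynomial.map_mul,
    Polynomial.map_pow, map_C, hg, hg', ha_map, hb_map]

variable [IsDomain A]

lemma IsGaCoaction.exists_degree_displacement_lt (hβ : IsGaCoaction β) (p : ℕ) [Fact p.Prime]
    [CharP A p] {g g' : A} (hg : g ∈ secondSocle β) (hg' : g' ∈ secondSocle β)
    (hg₀ : displacement β g ≠ 0) (hg'₀ : displacement β g' ≠ 0)
    (hle : (displacement β g).natDegree ≤ (displacement β g').natDegree) :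
    ∃ a ≠ 0, ∃ r ∈ secondSocle β, (displacement β r).degree < (displacement β g').degree ∧
      displacement β g ∣ C a * displacement β g' - displacement β r := by
  obtain ⟨e, he⟩ := (hβ.isAdditivePoly_displacement hg).exists_natDegree_eq_pow p hg₀
  obtain ⟨e', he'⟩ := (hβ.isAdditivePoly_displacement hg').exists_natDegree_eq_pow p hg'₀
  obtain ⟨d, rfl⟩ : ∃ d, e' = d + e :=
    Nat.exists_eq_add_of_le' ((Nat.pow_le_pow_iff_right (Fact.out : p.Prime).one_lt).1 (by omega))
  set a := (displacement β g).leadingCoeff ^ p ^ d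
  set b := (displacement β g').leadingCoeff
  have ha : a ∈ invariants β := by
    have h_lead : β (displacement β g).leadingCoeff =
        C (displacement β g).leadingCoeff := hg _
    rw [mem_invariants, map_pow, h_lead, C_pow]
  have hb : b ∈ invariants β := hg' _
  have hr := displacement_mul_sub_mul_pow p ha hb g g' d
  refine ⟨a, pow_ne_zero _ (leadingCoeff_ne_zero.2 hg₀), a * g' - b * g ^ p ^ d,
    mul_sub_mul_pow_mem_secondSocle p ha hb hg hg' d, ?_, ?_⟩
  · rw [hr]
    exact degree_C_mul_sub_C_mul_pow_lt hg'₀ hg₀ (by rw [he, he', pow_add])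
  · rw [hr, sub_sub_cancel]
    exact (dvd_pow_self _ (pow_ne_zero _ (Fact.out : p.Prime).ne_zero)).mul_left _

lemma IsGaCoaction.exists_displacement_dvd_C_mul (hβ : IsGaCoaction β) (p : ℕ) [Fact p.Prime]
    [CharP A p] {x : A} (hx : x ∈ secondSocle β) (hx₀ : displacement β x ≠ 0) :
    ∃ g ∈ secondSocle β, displacement β g ≠ 0 ∧
      ∀ g' ∈ secondSocle β, ∃ b ≠ 0, displacement β g ∣ C b * displacement β g' := by
  obtain ⟨g, ⟨hg, hg₀⟩, hmin⟩ := exists_minimalFor_of_wellFoundedLT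
    (fun g => g ∈ secondSocle β ∧ displacement β g ≠ 0)
    (fun g => (displacement β g).natDegree) ⟨x, hx, hx₀⟩
  refine ⟨g, hg, hg₀, fun g' hg' => ?_⟩
  induction hd : (displacement β g').degree using WellFoundedLT.induction generalizing g' with
  | ind d ih =>
    by_cases hg'₀ : displacement β g' = 0
    · exact ⟨1, one_ne_zero, by simp [hg'₀]⟩
    have hle : (displacement β g).natDegree ≤ (displacement β g').natDegree :=
      (le_total _ _).elim id (hmin ⟨hg', hg'₀⟩)
    obtain ⟨a, ha₀, r, hr, hlt, hdvd⟩ := hβ.exists_degree_displacement_lt p hg hg' hg₀ hg'₀ hle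
    obtain ⟨b, hb₀, hdvd_r⟩ := ih _ (hd ▸ hlt) r hr rfl
    refine ⟨b * a, mul_ne_zero hb₀ ha₀, ?_⟩
    have hsum : C (b * a) * displacement β g' =
        C b * (C a * displacement β g' - displacement β r) + C b * displacement β r := by
      rw [C_mul]
      ring
    exact hsum ▸ dvd_add (hdvd.mul_left _) hdvd_r

end RightDivision

section ZeroPedestal

variable {k A : Type*} [Field k] [CommRing A] [Algebra k A] {β : A →ₐ[k] A[X]}

lemma IsGaCoaction.mem_secondSocle_of_coeff_displacement_mem_sup (hβ : IsGaCoaction β) {x z : A}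
    (hx : ¬ IsPureTensor k (displacement β x))
    (hz : ∀ i, (displacement β z).coeff i ∈ invariants β ⊔ k ∙ x) : z ∈ secondSocle β := by
  have hδ (i : ℕ) :
      ∃ r : k, displacement β ((displacement β z).coeff i) = r • displacement β x := by
    obtain ⟨w, hw, y, hy, hwy⟩ := Submodule.mem_sup.1 (hz i)
    obtain ⟨r, rfl⟩ := Submodule.mem_span_singleton.1 hy
    refine ⟨r, ?_⟩
    rw [← hwy, map_add, map_smul, displacement_eq_zero_iff.2 hw, zero_add]
  choose r hr using hδ
  refine fun i => displacement_eq_zero_iff.1 ?_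
  rw [hr]
  by_contra hi
  have hri : r i ≠ 0 := left_ne_zero_of_smul hi
  refine hx (isPureTensor_of_coeff_eq_smul (w := (displacement β x).coeff i)
    fun j => ⟨(r i)⁻¹ * r j, ?_⟩)
  have hcomm := hβ.coeff_displacement_coeff_comm z i j
  rw [hr, hr, coeff_smul, coeff_smul] at hcomm
  rw [mul_smul, ← hcomm, inv_smul_smul₀ hri]

lemma IsGaCoaction.not_isPureTensor_displacement (hβ : IsGaCoaction β)
    (hped : largePedestal β = ⊥) {g : A} (hg : g ∈ secondSocle β) (hg' : g ∉ invariants β) :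
    ¬ IsPureTensor k (displacement β g) := by
  rintro ⟨c, w, hcw⟩
  have hcw₀ : c.map (algebraMap k A) * C w ≠ 0 := by
    rwa [← hcw, Ne, displacement_eq_zero_iff]
  have hc : c ≠ 0 := by
    rintro rfl
    simp at hcw₀
  have hw : w ≠ 0 := C_ne_zero.1 (right_ne_zero_of_mul hcw₀)
  have hw_inv : w ∈ invariants β := mem_of_coeff_map_mul_C_mem hc (hcw ▸ hg)
  have hc_add : IsAdditivePoly c := .of_map_mul_C hw (hcw ▸ hβ.isAdditivePoly_displacement hg)
  exact hw (largePedestal_eq_bot_iff.1 hped g w c hc_add hc hw_inv (sub_eq_iff_eq_add'.1 hcw))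

lemma IsGaCoaction.ringChar_pos_of_largePedestal_eq_bot [IsDomain A] (hβ : IsGaCoaction β)
    (hped : largePedestal β = ⊥) {g : A} (hg : g ∈ secondSocle β) (hg' : g ∉ invariants β) :
    0 < ringChar k := by
  refine Nat.pos_of_ne_zero fun hchar => hβ.not_isPureTensor_displacement hped hg hg' ?_
  have := (CharP.ringChar_zero_iff_CharZero k).1 hchar
  have := charZero_of_injective_algebraMap (algebraMap k A).injective
  exact ⟨X, _, by
    rw [map_X, mul_comm]
    exact (hβ.isAdditivePoly_displacement hg).eq_C_mul_X⟩

end ZeroPedestal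

lemma finrank_inf_eq_sub_one_iff {k M : Type*} [Field k] [AddCommGroup M] [Module k M]
    {U V : Submodule k M} [FiniteDimensional k V] {x : M} (hxV : x ∈ V) (hxU : x ∉ U) :
    Module.finrank k ↥(V ⊓ U) = Module.finrank k V - 1 ↔ V ≤ U ⊔ k ∙ x := by
  have hx₀ : x ≠ 0 := fun hx => hxU (hx ▸ U.zero_mem)
  have hdisj : Disjoint (V ⊓ U) (k ∙ x) :=
    (Submodule.disjoint_span_singleton' hx₀).2 fun hx => hxU hx.2
  have hsum : Module.finrank k ↥(V ⊓ (U ⊔ k ∙ x)) = Module.finrank k ↥(V ⊓ U) + 1 := by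
    have : FiniteDimensional k ↥(V ⊓ U) := Submodule.finiteDimensional_inf_left V U
    have h := Submodule.finrank_sup_add_finrank_inf_eq (V ⊓ U) (k ∙ x)
    rwa [hdisj.eq_bot, finrank_bot, finrank_span_singleton hx₀, add_zero,
      inf_sup_assoc_of_le U ((Submodule.span_singleton_le_iff_mem x V).2 hxV)] at h
  have hle : Module.finrank k ↥(V ⊓ (U ⊔ k ∙ x)) ≤ Module.finrank k V :=
    Submodule.finrank_mono inf_le_left
  refine ⟨fun h => ?_, fun h => ?_⟩
  · exact inf_eq_left.1 (Submodule.eq_of_le_of_finrank_eq inf_le_left (by omega))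
  · rw [inf_eq_left.2 h] at hsum
    omega

section LinearCoaction

variable {σ k : Type*} [Field k]

variable (σ k) in
/-- The space of linear forms in `k[x]`, on which a linear coaction acts. -/
noncomputable abbrev linearForms : Submodule k (MvPolynomial σ k) :=
  Submodule.span k (Set.range MvPolynomial.X)

lemma totalDegree_le_one_of_mem_linearForms {l : MvPolynomial σ k} (hl : l ∈ linearForms σ k) :
    l.totalDegree ≤ 1 := by
  rw [linearForms, ← MvPolynomial.homogeneousSubmodule_one_eq_span_X] at hl
  exact MvPolynomial.IsHomogeneous.totalDegree_le hl

lemma finrank_linearForms [Fintype σ] : Module.finrank k (linearForms σ k) = Fintype.card σ :=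
  finrank_span_eq_card (MvPolynomial.linearIndependent_X σ k)

variable {β : MvPolynomial σ k →ₐ[k] (MvPolynomial σ k)[X]}

lemma coeff_mem_linearForms (hlin : ∀ i j, (β (MvPolynomial.X i)).coeff j ∈ linearForms σ k) :
    ∀ v ∈ linearForms σ k, ∀ j, (β v).coeff j ∈ linearForms σ k := by
  intro v hv j
  induction hv using Submodule.span_induction with
  | mem _ hx =>
    obtain ⟨i, rfl⟩ := hx
    exact hlin i j
  | zero => simp
  | add x y _ _ hx hy => simpa only [map_add, coeff_add] using add_mem hx hy
  | smul r x _ hx => simpa only [map_smul, coeff_smul] using Submodule.smul_mem _ r hx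

lemma coeff_displacement_mem_linearForms
    (hlin : ∀ i j, (β (MvPolynomial.X i)).coeff j ∈ linearForms σ k)
    {v : MvPolynomial σ k} (hv : v ∈ linearForms σ k) (j : ℕ) :
    (displacement β v).coeff j ∈ linearForms σ k := by
  rw [displacement_apply, coeff_sub, coeff_C]
  refine sub_mem (coeff_mem_linearForms hlin v hv j) ?_
  split_ifs
  exacts [hv, zero_mem _]

lemma not_linearForms_le_invariants (hnt : ∃ a, β a ≠ C a) :
    ¬ linearForms σ k ≤ invariants β := by
  intro hle
  obtain ⟨a, ha⟩ := hnt
  have hβ : β = CAlgHom :=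
    MvPolynomial.algHom_ext fun i => hle (Submodule.subset_span (Set.mem_range_self i))
  exact ha (DFunLike.congr_fun hβ a)

lemma displacement_dvd_of_linearForms_le {x : MvPolynomial σ k}
    (hle : linearForms σ k ≤ invariants β ⊔ k ∙ x) (a : MvPolynomial σ k) :
    displacement β x ∣ displacement β a := by
  induction a using MvPolynomial.induction_on with
  | C r =>
    have hr : MvPolynomial.C r ∈ invariants β := β.commutes r
    simp [displacement_eq_zero_iff.2 hr]
  | add a b ha hb => simpa only [map_add] using dvd_add ha hb
  | mul_X a i ha =>
    obtain ⟨w, hw, y, hy, hwy⟩ :=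
      Submodule.mem_sup.1 (hle (Submodule.subset_span (Set.mem_range_self i)))
    obtain ⟨r, rfl⟩ := Submodule.mem_span_singleton.1 hy
    have hX : displacement β (MvPolynomial.X i) = r • displacement β x := by
      rw [← hwy, map_add, map_smul, displacement_eq_zero_iff.2 hw, zero_add]
    rw [displacement_mul, hX]
    exact dvd_add (ha.mul_right _) ((dvd_smul_of_dvd r dvd_rfl).mul_left _)

lemma largePedestal_eq_bot_of_dvd {D : (MvPolynomial σ k)[X]} (hD : ¬ IsPureTensor k D)
    (hdvd : ∀ a, D ∣ displacement β a) : largePedestal β = ⊥ := by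
  refine largePedestal_eq_bot_iff.2 fun g h c _ hc _ hg => ?_
  by_contra hh
  have hc_map : c.map (algebraMap k (MvPolynomial σ k)) ≠ 0 :=
    (Polynomial.map_ne_zero_iff (algebraMap k (MvPolynomial σ k)).injective).2 hc
  have hδ : displacement β g = c.map (algebraMap k (MvPolynomial σ k)) * C h :=
    sub_eq_iff_eq_add'.2 hg
  refine hD (IsPureTensor.of_dvd ⟨c, h, rfl⟩ (mul_ne_zero hc_map (C_ne_zero.2 hh)) ?_)
  exact hδ ▸ hdvd g

lemma IsGaCoaction.exists_displacement_eq_smul (hβ : IsGaCoaction β)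
    (hlin : ∀ i j, (β (MvPolynomial.X i)).coeff j ∈ linearForms σ k)
    (hped : largePedestal β = ⊥) {x z : MvPolynomial σ k} (hx : x ∈ linearForms σ k)
    (hx_socle : x ∈ secondSocle β) (hx_inv : x ∉ invariants β) (hz : z ∈ linearForms σ k)
    (hz_socle : z ∈ secondSocle β) : ∃ r : k, displacement β z = r • displacement β x := by
  have : Fact (ringChar k).Prime :=
    ⟨CharP.char_prime_of_ne_zero k
      (hβ.ringChar_pos_of_largePedestal_eq_bot hped hx_socle hx_inv).ne'⟩
  obtain ⟨g, hg, hg₀, hdvd⟩ := hβ.exists_displacement_dvd_C_mul (ringChar k) hx_socle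
    (displacement_eq_zero_iff.not.2 hx_inv)
  obtain ⟨b₁, hb₁, hdvd₁⟩ := hdvd x hx_socle
  obtain ⟨b₂, hb₂, hdvd₂⟩ := hdvd z hz_socle
  have hdeg {v : MvPolynomial σ k} (hv : v ∈ linearForms σ k) (j : ℕ) :
      ((displacement β v).coeff j).totalDegree ≤ 1 :=
    totalDegree_le_one_of_mem_linearForms (coeff_displacement_mem_linearForms hlin hv j)
  exact (hβ.isAdditivePoly_displacement hx_socle).eq_smul_of_dvd_C_mul
    (hβ.isAdditivePoly_displacement hz_socle) (hdeg hx) (hdeg hz)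
    (hβ.not_isPureTensor_displacement hped hg (displacement_eq_zero_iff.not.1 hg₀))
    (hβ.not_isPureTensor_displacement hped hx_socle hx_inv) hb₁ hb₂ hdvd₁ hdvd₂

lemma IsGaCoaction.linearForms_le_of_largePedestal_eq_bot (hβ : IsGaCoaction β)
    (hlin : ∀ i j, (β (MvPolynomial.X i)).coeff j ∈ linearForms σ k)
    (hped : largePedestal β = ⊥) {x : MvPolynomial σ k} (hx : x ∈ linearForms σ k)
    (hx_socle : x ∈ secondSocle β) (hx_inv : x ∉ invariants β) :
    linearForms σ k ≤ invariants β ⊔ k ∙ x := by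
  by_contra hle
  obtain ⟨z, hz, hz_sup, hz_coeff⟩ :=
    hβ.exists_notMem_coeff_displacement_mem (coeff_mem_linearForms hlin) hle
  have hz_socle : z ∈ secondSocle β := hβ.mem_secondSocle_of_coeff_displacement_mem_sup
    (hβ.not_isPureTensor_displacement hped hx_socle hx_inv) hz_coeff
  obtain ⟨r, hr⟩ := hβ.exists_displacement_eq_smul hlin hped hx hx_socle hx_inv hz hz_socle
  have hz_inv : z - r • x ∈ invariants β := by
    rw [← displacement_eq_zero_iff, map_sub, map_smul, hr, sub_self]
  exact hz_sup (Submodule.mem_sup.2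
    ⟨_, hz_inv, r • x, Submodule.mem_span_singleton.2 ⟨r, rfl⟩, sub_add_cancel _ _⟩)

theorem stmt10_general [Fintype σ] (hβ : IsGaCoaction β)
    (hlin : ∀ i j, (β (MvPolynomial.X i)).coeff j ∈ linearForms σ k)
    (hnt : ∃ a, β a ≠ C a) :
    largePedestal β = ⊥ ↔
      0 < ringChar k ∧
      Module.finrank k ↥(linearForms σ k ⊓ invariants β) = Fintype.card σ - 1 ∧
      ∀ x ∈ linearForms σ k, β x ≠ C x → ∀ (c : k[X]) (w : MvPolynomial σ k),
        w ∈ linearForms σ k → β w = C w →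
        β x - C x ≠ c.map (algebraMap k (MvPolynomial σ k)) * C w := by
  obtain ⟨x, hx, hx_inv, hx_socle⟩ := hβ.exists_notMem_coeff_displacement_mem
    (coeff_mem_linearForms hlin) (not_linearForms_le_invariants hnt)
  have : FiniteDimensional k (linearForms σ k) :=
    FiniteDimensional.span_of_finite k (Set.finite_range _)
  rw [← finrank_linearForms (k := k), finrank_inf_eq_sub_one_iff hx hx_inv]
  constructor
  · intro hped
    refine ⟨hβ.ringChar_pos_of_largePedestal_eq_bot hped hx_socle hx_inv,
      hβ.linearForms_le_of_largePedestal_eq_bot hlin hped hx hx_socle hx_inv, ?_⟩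
    intro y _ hy_inv c w _ hw hcw
    have hy_socle : y ∈ secondSocle β := fun i => by
      rw [displacement_apply, hcw, coeff_map_mul_C]
      exact Submodule.smul_mem _ _ hw
    exact hβ.not_isPureTensor_displacement hped hy_socle hy_inv ⟨c, w, hcw⟩
  · rintro ⟨-, hle, hpure⟩
    have hx_pure : ¬ IsPureTensor k (displacement β x) := by
      rintro ⟨c, w, hcw⟩
      by_cases hc : c = 0
      · exact hx_inv (displacement_eq_zero_iff.1 (by simp [hcw, hc]))
      exact hpure x hx hx_inv c w
        (mem_of_coeff_map_mul_C_mem hc (hcw ▸ coeff_displacement_mem_linearForms hlin hx))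
        (mem_of_coeff_map_mul_C_mem (U := invariants β) hc (hcw ▸ hx_socle)) hcw
    exact largePedestal_eq_bot_of_dvd hx_pure (displacement_dvd_of_linearForms_le hle)

end LinearCoaction

lemma coeff_mem_linearForms_of_upperTriangular {k : Type*} [Field k] {n : ℕ}
    {β : MvPolynomial (Fin n) k →ₐ[k] (MvPolynomial (Fin n) k)[X]} {q : Fin n → Fin n → k[X]}
    (hup : ∀ i, β (MvPolynomial.X i) = C (MvPolynomial.X i) + ∑ j ∈ Finset.Iio i,
      (q i j).map (algebraMap k (MvPolynomial (Fin n) k)) * C (MvPolynomial.X j)) (i : Fin n)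
    (m : ℕ) : (β (MvPolynomial.X i)).coeff m ∈ linearForms (Fin n) k := by
  have hX (j : Fin n) : MvPolynomial.X j ∈ linearForms (Fin n) k :=
    Submodule.subset_span (Set.mem_range_self j)
  rw [hup, coeff_add, finsetSum_coeff, coeff_C]
  refine add_mem ?_ (sum_mem fun j _ => ?_)
  · split_ifs
    exacts [hX i, zero_mem _]
  · rw [coeff_map_mul_C]
    exact Submodule.smul_mem _ _ (hX j)

/-- classification of representations with zero large pedestal
ideal: for a nontrivial linear, upper-triangular coaction on `k[x₁,…,xₙ]` with
space of invariant linear forms `W`, the large pedestal ideal is zero iff `k`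
has positive characteristic, `W` has dimension `n − 1`, and for no linear form
`x ∉ W` is `β(x) − x` of the form `c(t)·w` with `w ∈ W`.  In particular, a zero
large pedestal ideal forces positive characteristic. -/
theorem stmt10 {k : Type*} [Field k] [IsAlgClosed k] {n : ℕ}
    (β : MvPolynomial (Fin n) k →ₐ[k] Polynomial (MvPolynomial (Fin n) k))
    (hβ : IsGaCoaction β)
    (q : Fin n → Fin n → Polynomial k)
    (hup : ∀ i : Fin n, β (MvPolynomial.X i) =
      Polynomial.C (MvPolynomial.X i) +
        ∑ j ∈ Finset.Iio i,
          (q i j).map (algebraMap k (MvPolynomial (Fin n) k)) *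
            Polynomial.C (MvPolynomial.X j))
    (hnt : ∃ a : MvPolynomial (Fin n) k, β a ≠ Polynomial.C a) :
    ((∀ (g h : MvPolynomial (Fin n) k) (c : Polynomial k),
        IsAdditivePoly c → c ≠ 0 →
        β h = Polynomial.C h →
        β g = Polynomial.C g +
          c.map (algebraMap k (MvPolynomial (Fin n) k)) * Polynomial.C h →
        h = 0) ↔
      (0 < ringChar k ∧
       Module.finrank k
         ↥(Submodule.span k
             (Set.range (MvPolynomial.X : Fin n → MvPolynomial (Fin n) k)) ⊓
           LinearMap.eqLocus β.toLinearMap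
             (Polynomial.CAlgHom (R := k)
               (A := MvPolynomial (Fin n) k)).toLinearMap) = n - 1 ∧
       ∀ x ∈ Submodule.span k
           (Set.range (MvPolynomial.X : Fin n → MvPolynomial (Fin n) k)),
         β x ≠ Polynomial.C x →
         ∀ (c : Polynomial k) (w : MvPolynomial (Fin n) k),
           w ∈ Submodule.span k
             (Set.range (MvPolynomial.X : Fin n → MvPolynomial (Fin n) k)) →
           β w = Polynomial.C w →
           β x - Polynomial.C x ≠
             c.map (algebraMap k (MvPolynomial (Fin n) k)) * Polynomial.C w)) ∧
    ((∀ (g h : MvPolynomial (Fin n) k) (c : Polynomial k),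
        IsAdditivePoly c → c ≠ 0 →
        β h = Polynomial.C h →
        β g = Polynomial.C g +
          c.map (algebraMap k (MvPolynomial (Fin n) k)) * Polynomial.C h →
        h = 0) → 0 < ringChar k) := by
  have hiff := stmt10_general hβ (coeff_mem_linearForms_of_upperTriangular hup) hnt
  rw [largePedestal_eq_bot_iff, Fintype.card_fin] at hiff
  exact ⟨hiff, fun hped => (hiff.1 hped).1⟩
end

section
/- Let k be an algebraically closed field, A a finitely generated integral domain over k with a 𝔾ₐ-coaction β, generated as a k-algebra by z₁,…,zₙ, and let (g,h) be a principle pair with h ≠ 0. Set f_i := π(z_i) ∈ A_h, where π(a) is obtained by mapping the coefficients of β(a) into A_h and evaluating t at −g/h. Then the ring of invariants (A_h)^{𝔾ₐ} equals the k-subalgebra of A_h generated by f₁,…,fₙ together with h^{−1}. Moreover, for every polynomial R ∈ k[Z₁,…,Zₙ] such that R(z₁,…,zₙ) is invariant, one has R(z₁,…,zₙ) = R(f₁,…,fₙ) in A_h. -/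
open Polynomial

/-!
A principle pair `(g, h)` makes `s = g / h` a slice of the coaction on `A_h`: `β s = s + t`.
Whenever a coaction `β` has a slice `s`, the algebra endomorphism `π : a ↦ β(a)|_{t = -s}` is a
retraction onto the invariants. It fixes invariants because their coaction is constant, and it takes
invariant values because coassociativity gives `β (π a) = β(a)|_{t ↦ t + β(-s)}`, where
`t + β(-s) = -s` is constant. Hence the images under `π` of any generators of the algebra generate
the invariants; for `A_h` the generators are the `z i` together with `h⁻¹`, which `π` fixes.
-/

section coaddSubst

variable {R R' : Type*} [CommSemiring R] [CommSemiring R']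

theorem coaddSubst_map (φ : R →+* R') (p : R[X]) :
    coaddSubst (p.map φ) = (coaddSubst p).map (mapRingHom φ) := by
  induction p using Polynomial.induction_on' with
  | add p q hp hq => simpa only [coaddSubst, Polynomial.map_add, eval₂_add] using congr($hp + $hq)
  | monomial n a => simp [coaddSubst]

theorem eval_coaddSubst (p q : R[X]) : (coaddSubst p).eval q = p.comp (X + q) := by
  induction p using Polynomial.induction_on' with
  | add p₁ p₂ h₁ h₂ => simpa only [coaddSubst, eval₂_add, eval_add, add_comp] using congr($h₁ + $h₂)
  | monomial n a => simp [coaddSubst]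

end coaddSubst

section gaInvariants

variable {k A : Type*} [CommSemiring k] [CommSemiring A] [Algebra k A]

/-- The subalgebra `A^{𝔾ₐ}` of invariants of a coaction `β`. -/
noncomputable def gaInvariants (β : A →ₐ[k] A[X]) : Subalgebra k A :=
  AlgHom.equalizer β CAlgHom

theorem mem_gaInvariants {β : A →ₐ[k] A[X]} {a : A} : a ∈ gaInvariants β ↔ β a = C a :=
  Iff.rfl

theorem mem_gaInvariants_of_mul_eq_one {β : A →ₐ[k] A[X]} {h u : A} (hu : h * u = 1)
    (hh : h ∈ gaInvariants β) : u ∈ gaInvariants β := by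
  rw [mem_gaInvariants] at hh ⊢
  have hβu : β u * C h = 1 := by rw [← hh, ← map_mul, mul_comm, hu, map_one]
  have hCu : C h * C u = 1 := by rw [← C_mul, hu, C_1]
  exact left_inv_eq_right_inv hβu hCu

theorem map_mul_eq_add_of_pair {β : A →ₐ[k] A[X]} {g h u : A} {b : A[X]} (hu : h * u = 1)
    (hh : h ∈ gaInvariants β) (hg : β g = C g + b * C h) : β (g * u) = C (g * u) + b := by
  have hβu : β u = C u := mem_gaInvariants_of_mul_eq_one hu hh
  rw [map_mul, hg, hβu, add_mul, mul_assoc, ← C_mul, ← C_mul, hu, C_1, mul_one]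

end gaInvariants

section dixmierMap

variable {k A : Type*} [CommSemiring k] [CommRing A] [Algebra k A]

/-- The Dixmier map `π : A → A` of a coaction `β` at `s`, evaluating `β a` at `t = -s`. When `s` is
a slice, i.e. `β s = s + t`, it is a retraction of `A` onto the invariants. -/
noncomputable def dixmierMap (β : A →ₐ[k] A[X]) (s : A) : A →ₐ[k] A :=
  ((aeval (-s)).restrictScalars k).comp β

theorem dixmierMap_apply (β : A →ₐ[k] A[X]) (s a : A) : dixmierMap β s a = (β a).eval (-s) :=
  congr($(coe_aeval_eq_eval (-s)) (β a))

theorem dixmierMap_eq_self_of_mem {β : A →ₐ[k] A[X]} {a : A} (ha : a ∈ gaInvariants β) (s : A) :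
    dixmierMap β s a = a := by
  rw [dixmierMap_apply, mem_gaInvariants.1 ha, eval_C]

end dixmierMap

theorem dixmierMap_algebraMap {k A S : Type*} [CommSemiring k] [CommSemiring A] [Algebra k A]
    [CommRing S] [Algebra A S] [Algebra k S] {β : A →ₐ[k] A[X]} {βS : S →ₐ[k] S[X]}
    (hext : ∀ a, βS (algebraMap A S a) = (β a).map (algebraMap A S)) (s : S) (a : A) :
    dixmierMap βS s (algebraMap A S a) = (β a).eval₂ (algebraMap A S) (-s) := by
  rw [dixmierMap_apply, hext, eval_map]

namespace IsGaCoaction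

theorem map_eval {k A : Type*} [CommSemiring k] [CommSemiring A] [Algebra k A]
    {β : A →ₐ[k] A[X]} (hβ : IsGaCoaction β) (a c : A) :
    β ((β a).eval c) = (β a).comp (X + β c) :=
  calc β ((β a).eval c) = ((β a).map β.toRingHom).eval (β c) :=
        (eval_map_apply β.toRingHom c).symm
    _ = (coaddSubst (β a)).eval (β c) := by rw [hβ.2]
    _ = (β a).comp (X + β c) := eval_coaddSubst _ _

section slice

variable {k A : Type*} [CommSemiring k] [CommRing A] [Algebra k A]
variable {β : A →ₐ[k] A[X]} {s : A}

theorem dixmierMap_mem (hβ : IsGaCoaction β) (hs : β s = C s + X) (a : A) :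
    dixmierMap β s a ∈ gaInvariants β := by
  have hconst : X + β (-s) = C (-s) := by rw [map_neg, hs, C_neg]; ring
  rw [mem_gaInvariants, dixmierMap_apply, hβ.map_eval, hconst, comp_C]

theorem range_dixmierMap (hβ : IsGaCoaction β) (hs : β s = C s + X) :
    (dixmierMap β s).range = gaInvariants β := by
  refine le_antisymm ?_ fun a ha ↦ ⟨a, dixmierMap_eq_self_of_mem ha s⟩
  rintro _ ⟨a, rfl⟩
  exact hβ.dixmierMap_mem hs a

theorem gaInvariants_eq_adjoin_image (hβ : IsGaCoaction β) (hs : β s = C s + X) {Z : Set A}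
    (hZ : Algebra.adjoin k Z = ⊤) :
    gaInvariants β = Algebra.adjoin k (dixmierMap β s '' Z) := by
  rw [← hβ.range_dixmierMap hs, ← Algebra.map_top, ← hZ, AlgHom.map_adjoin]

end slice

theorem of_isLocalization {k A S : Type*} [CommSemiring k] [CommSemiring A] [Algebra k A]
    {β : A →ₐ[k] A[X]} (hβ : IsGaCoaction β) (M : Submonoid A) [CommSemiring S] [Algebra A S]
    [IsLocalization M S] [Algebra k S] {βS : S →ₐ[k] S[X]}
    (hext : ∀ a, βS (algebraMap A S a) = (β a).map (algebraMap A S)) : IsGaCoaction βS := by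
  have hcomp : βS.toRingHom.comp (algebraMap A S) =
      (mapRingHom (algebraMap A S)).comp β.toRingHom := RingHom.ext hext
  have hcounit : (evalRingHom 0).comp βS.toRingHom = RingHom.id S := by
    refine IsLocalization.ringHom_ext M (RingHom.ext fun a ↦ ?_)
    change (βS (algebraMap A S a)).eval 0 = algebraMap A S a
    rw [hext, eval_zero_map, hβ.1]
  have hcoassoc : (eval₂RingHom (C.comp C) (C X + X)).comp βS.toRingHom =
      (mapRingHom βS.toRingHom).comp βS.toRingHom := by
    refine IsLocalization.ringHom_ext M (RingHom.ext fun a ↦ ?_)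
    change coaddSubst (βS (algebraMap A S a)) = (βS (algebraMap A S a)).map βS.toRingHom
    rw [hext, coaddSubst_map, hβ.2, Polynomial.map_map, Polynomial.map_map, hcomp]
  exact ⟨RingHom.congr_fun hcounit, RingHom.congr_fun hcoassoc⟩

end IsGaCoaction

section localization

variable {k A S : Type*} [CommSemiring k] [CommSemiring A] [Algebra k A] [CommSemiring S]
  [Algebra A S] [Algebra k S] {β : A →ₐ[k] A[X]} {βS : S →ₐ[k] S[X]}

theorem algebraMap_mem_gaInvariants
    (hext : ∀ a, βS (algebraMap A S a) = (β a).map (algebraMap A S)) {a : A}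
    (ha : a ∈ gaInvariants β) : algebraMap A S a ∈ gaInvariants βS := by
  rw [mem_gaInvariants, hext, mem_gaInvariants.1 ha, map_C]

variable {h : A} [IsLocalization.Away h S]

theorem invSelf_mem_gaInvariants
    (hext : ∀ a, βS (algebraMap A S a) = (β a).map (algebraMap A S))
    (hh : h ∈ gaInvariants β) : IsLocalization.Away.invSelf h ∈ gaInvariants βS :=
  mem_gaInvariants_of_mul_eq_one (IsLocalization.Away.mul_invSelf h)
    (algebraMap_mem_gaInvariants hext hh)

theorem map_mk'_eq_add_of_pair
    (hext : ∀ a, βS (algebraMap A S a) = (β a).map (algebraMap A S)) {g : A} {b : A[X]}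
    (hh : h ∈ gaInvariants β) (hg : β g = C g + b * C h) :
    βS (IsLocalization.mk' S g ⟨h, Submonoid.mem_powers h⟩) =
      C (IsLocalization.mk' S g ⟨h, Submonoid.mem_powers h⟩) + b.map (algebraMap A S) := by
  have hgS : βS (algebraMap A S g) =
      C (algebraMap A S g) + b.map (algebraMap A S) * C (algebraMap A S h) := by
    simp only [hext, hg, Polynomial.map_add, Polynomial.map_mul, map_C]
  rw [IsLocalization.mk'_eq_mul_mk'_one]
  exact map_mul_eq_add_of_pair (IsLocalization.Away.mul_invSelf h)
    (algebraMap_mem_gaInvariants hext hh) hgS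

end localization

theorem adjoin_image_union_invSelf_eq_top {k A S : Type*} [CommSemiring k] [CommSemiring A]
    [Algebra k A] [CommSemiring S] [Algebra A S] [Algebra k S] [IsScalarTower k A S]
    {Z : Set A} (hZ : Algebra.adjoin k Z = ⊤) (h : A) [IsLocalization.Away h S] :
    Algebra.adjoin k (algebraMap A S '' Z ∪ {IsLocalization.Away.invSelf h}) = ⊤ := by
  refine Algebra.eq_top_iff.2 fun x ↦ ?_
  obtain ⟨n, a, hxa⟩ := IsLocalization.Away.surj (S := S) h x
  have hx : x = algebraMap A S a * IsLocalization.Away.invSelf h ^ n := by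
    rw [← hxa, mul_assoc, ← mul_pow, IsLocalization.Away.mul_invSelf, one_pow, mul_one]
  have ha : algebraMap A S a ∈ Algebra.adjoin k (algebraMap A S '' Z) := by
    rw [← IsScalarTower.coe_toAlgHom' k A S, ← AlgHom.map_adjoin, hZ]
    exact Subalgebra.mem_map.2 ⟨a, Algebra.mem_top, rfl⟩
  rw [hx, Algebra.adjoin_union]
  exact mul_mem (le_sup_left (α := Subalgebra k S) ha)
    (pow_mem (le_sup_right (α := Subalgebra k S) (Algebra.self_mem_adjoin_singleton k _)) n)

theorem stmt12_general {k A ι : Type*} [CommSemiring k] [CommSemiring A] [Algebra k A]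
    (β : A →ₐ[k] A[X]) (hβ : IsGaCoaction β)
    (z : ι → A) (hz : Algebra.adjoin k (Set.range z) = ⊤)
    (g h : A) (hinv : β h = C h) (hpair : β g = C g + X * C h)
    (S : Type*) [CommRing S] [Algebra A S] [Algebra k S] [IsScalarTower k A S]
    [IsLocalization.Away h S]
    (βS : S →ₐ[k] S[X]) (hext : ∀ a, βS (algebraMap A S a) = (β a).map (algebraMap A S)) :
    (∀ x : S, βS x = C x ↔
      x ∈ Algebra.adjoin k
        (Set.range (fun i ↦ (β (z i)).eval₂ (algebraMap A S)
            (-(IsLocalization.mk' S g ⟨h, Submonoid.mem_powers h⟩))) ∪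
          {IsLocalization.mk' S (1 : A) ⟨h, Submonoid.mem_powers h⟩})) ∧
    (∀ R : MvPolynomial ι k,
      β (MvPolynomial.aeval z R) = C (MvPolynomial.aeval z R) →
      algebraMap A S (MvPolynomial.aeval z R) =
        MvPolynomial.aeval (fun i ↦ (β (z i)).eval₂ (algebraMap A S)
          (-(IsLocalization.mk' S g ⟨h, Submonoid.mem_powers h⟩))) R) := by
  set s : S := IsLocalization.mk' S g ⟨h, Submonoid.mem_powers h⟩
  have hβS : IsGaCoaction βS := hβ.of_isLocalization (Submonoid.powers h) hext
  have hu : IsLocalization.Away.invSelf h ∈ gaInvariants βS :=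
    invSelf_mem_gaInvariants hext hinv
  have hs : βS s = C s + X := by
    rw [map_mk'_eq_add_of_pair hext hinv hpair, map_X]
  simp only [← dixmierMap_algebraMap hext]
  refine ⟨fun x ↦ ?_, fun R hR ↦ ?_⟩
  · have hgen := hβS.gaInvariants_eq_adjoin_image hs (adjoin_image_union_invSelf_eq_top hz h)
    rw [Set.image_union, Set.image_singleton, dixmierMap_eq_self_of_mem hu, ← Set.range_comp,
      ← Set.range_comp] at hgen
    exact SetLike.ext_iff.1 hgen x
  · have hRS : algebraMap A S (MvPolynomial.aeval z R) ∈ gaInvariants βS :=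
      algebraMap_mem_gaInvariants hext hR
    rw [← dixmierMap_eq_self_of_mem hRS s, ← MvPolynomial.aeval_algebraMap_apply,
      MvPolynomial.comp_aeval_apply]
    rfl

/-- van den Essen-type computation of invariants: if
`z₁,…,zₙ` generate `A`, `(g,h)` is a principle pair with `h ≠ 0`, and
`f_i := π(z_i)` (coefficients of `β(z_i)` pushed to `A_h = S`, `t ↦ −g/h`),
then `(A_h)^{𝔾ₐ}` is generated as a `k`-algebra by `f₁,…,fₙ` and `h⁻¹`, and any
invariant `R(z₁,…,zₙ)` equals `R(f₁,…,fₙ)` in `A_h`. -/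
theorem stmt12 {k : Type*} [Field k] [IsAlgClosed k]
    {A : Type*} [CommRing A] [IsDomain A] [Algebra k A]
    (hfg : Algebra.FiniteType k A)
    (β : A →ₐ[k] Polynomial A) (hβ : IsGaCoaction β)
    {n : ℕ} (z : Fin n → A)
    (hz : Algebra.adjoin k (Set.range z) = ⊤)
    (g h : A) (hh0 : h ≠ 0)
    (hinv : β h = Polynomial.C h)
    (hpair : β g = Polynomial.C g + Polynomial.X * Polynomial.C h)
    (S : Type*) [CommRing S] [Algebra A S] [Algebra k S] [IsScalarTower k A S]
    [IsLocalization.Away h S]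
    (βS : S →ₐ[k] Polynomial S) (hβS : IsGaCoaction βS)
    (hext : ∀ a : A, βS (algebraMap A S a) = (β a).map (algebraMap A S)) :
    (∀ x : S, βS x = Polynomial.C x ↔
      x ∈ Algebra.adjoin k
        (Set.range (fun i : Fin n => (β (z i)).eval₂ (algebraMap A S)
            (-(IsLocalization.mk' S g ⟨h, Submonoid.mem_powers h⟩))) ∪
          {IsLocalization.mk' S (1 : A) ⟨h, Submonoid.mem_powers h⟩})) ∧
    (∀ R : MvPolynomial (Fin n) k,
      β (MvPolynomial.aeval z R) = Polynomial.C (MvPolynomial.aeval z R) →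
      algebraMap A S (MvPolynomial.aeval z R) =
        MvPolynomial.aeval (fun i : Fin n => (β (z i)).eval₂ (algebraMap A S)
          (-(IsLocalization.mk' S g ⟨h, Submonoid.mem_powers h⟩))) R) :=
  stmt12_general β hβ z hz g h hinv hpair S βS hext
end
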